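/- Fix λ' > 0 and let u(y) = (λ'/(λ'² + |y|²))^{(N−4)/2} (the bubble centered at ξ' = 0). Then ∫_{ℝ^N} Σ_{i,j,m,s=1}^N (∂_m∂_m H̄_{ij})(y) (∂_s∂_s H̄_{ij})(y) u(y)² dy = |S^{N−1}| · (Σ_{i,j,k,ℓ=1}^N (W_{ikjℓ}+W_{iℓjk})²) · λ'^{N−4} · [1/(2N(N+2))] · ∫₀^∞ [ 2(N+4) f'(r²) + 4 r² f''(r²) ]² r^{N+3}/(λ'²+r²)^{N−4} dr. -/

import Mathlib

open scoped BigOperators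
open MeasureTheory

noncomputable section

/-- The partial derivative `∂f/∂y_i` of a function on Euclidean space. -/
def pd (N : ℕ) (i : Fin N) (f : EuclideanSpace ℝ (Fin N) → ℝ) :
    EuclideanSpace ℝ (Fin N) → ℝ :=
  fun y => fderiv ℝ f y (EuclideanSpace.single i 1)

/-- `H_{ij}(y) = Σ_{p,q} W_{ipjq} y_p y_q`. -/
def Hmat (N : ℕ) (W : Fin N → Fin N → Fin N → Fin N → ℝ) (i j : Fin N)
    (y : EuclideanSpace ℝ (Fin N)) : ℝ :=
  ∑ p : Fin N, ∑ q : Fin N, W i p j q * y p * y q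

/-- `H̄_{ij}(y) = f(|y|²) H_{ij}(y)`. -/
def Hbar (N : ℕ) (W : Fin N → Fin N → Fin N → Fin N → ℝ) (f : ℝ → ℝ) (i j : Fin N)
    (y : EuclideanSpace ℝ (Fin N)) : ℝ :=
  f (‖y‖ ^ 2) * Hmat N W i j y

/-- The surface measure on the unit sphere `S^{N-1} ⊂ ℝ^N`. -/
def sphereMeasure (N : ℕ) :
    Measure (Metric.sphere (0 : EuclideanSpace ℝ (Fin N)) 1) :=
  (volume : Measure (EuclideanSpace ℝ (Fin N))).toSphere

/-- `|S^{N-1}|`, the total surface measure of the unit sphere in `ℝ^N`. -/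
def sphereArea (N : ℕ) : ℝ := (sphereMeasure N Set.univ).toReal

/-!
The spherical integrals come from one Green-type identity: if `h` is `C²` and homogeneous of degree
`k + 2` on an `n`-dimensional space, then `∫_S Δh = (k + 2) (k + n) ∫_S h`. It follows by
integrating `Δh` by parts against a Gaussian and using Euler's identity. For a quadratic form `q`
it gives the trace formula `∫_S q = |S| tr q / n`; when `q` is harmonic, `Δ(q²) = 2 |∇q|²`, and it
reduces `∫_S q²` to the trace formula for the squares of the linear forms `∂ᵢq`.

The functions `H_{ij}` are harmonic quadratic forms because `W` is trace-free, hence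
`Δ(f(|y|²) H_{ij}) = (2 (n + 4) f'(|y|²) + 4 |y|² f''(|y|²)) H_{ij}`, and polar coordinates split
the integral into `∫_S H_{ij}²` and a radial integral.
-/

/-- A function `h` on a real vector space is positively homogeneous of degree `k` if
`h (r • x) = r ^ k * h x` for all `r > 0`. -/
def IsPosHomogeneous {E : Type*} [AddCommGroup E] [Module ℝ E] (k : ℕ) (h : E → ℝ) : Prop :=
  ∀ r : ℝ, 0 < r → ∀ x, h (r • x) = r ^ k * h x

section Laplacian

open InnerProductSpace Laplacian
open scoped Gradient

variable {ι E : Type*} [Fintype ι] [NormedAddCommGroup E] [InnerProductSpace ℝ E]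
  [FiniteDimensional ℝ E] {F G : E → ℝ} {f : ℝ → ℝ} {B : E →L[ℝ] E →L[ℝ] ℝ}

theorem laplacian_eq_sum_fderiv_fderiv (b : OrthonormalBasis ι ℝ E) (hF : ContDiff ℝ 2 F) (x : E) :
    Δ F x = ∑ i, fderiv ℝ (fun y => fderiv ℝ F y (b i)) x (b i) := by
  have hF' : DifferentiableAt ℝ (fderiv ℝ F) x :=
    (hF.fderiv_right (m := 1) le_rfl).differentiable_one x
  rw [laplacian_eq_iteratedFDeriv_orthonormalBasis F b]
  refine Finset.sum_congr rfl fun i _ => ?_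
  simp [iteratedFDeriv_two_apply, fderiv_clm_apply hF' (differentiableAt_const _)]

theorem laplacian_mul (hF : ContDiff ℝ 2 F) (hG : ContDiff ℝ 2 G) (x : E) :
    Δ (fun y => F y * G y) x = F x * Δ G x + 2 * ⟪∇ F x, ∇ G x⟫_ℝ + G x * Δ F x := by
  let b := stdOrthonormalBasis ℝ E
  have hF₁ : Differentiable ℝ F := hF.differentiable two_ne_zero
  have hG₁ : Differentiable ℝ G := hG.differentiable two_ne_zero
  have hF₂ (v : E) : Differentiable ℝ (fun y => fderiv ℝ F y v) := by fun_prop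
  have hG₂ (v : E) : Differentiable ℝ (fun y => fderiv ℝ G y v) := by fun_prop
  have hFG (v y : E) : fderiv ℝ (fun y => F y * G y) y v =
      F y * fderiv ℝ G y v + G y * fderiv ℝ F y v := by
    rw [fderiv_fun_mul (hF₁ y) (hG₁ y)]
    rfl
  rw [laplacian_eq_sum_fderiv_fderiv b (hF.mul hG), laplacian_eq_sum_fderiv_fderiv b hF,
    laplacian_eq_sum_fderiv_fderiv b hG, ← b.sum_inner_mul_inner]
  simp only [inner_gradient_left, inner_gradient_right, Finset.mul_sum, ← Finset.sum_add_distrib]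
  refine Finset.sum_congr rfl fun i _ => ?_
  simp only [hFG]
  rw [fderiv_fun_add ((hF₁ x).fun_mul (hG₂ _ x)) ((hG₁ x).fun_mul (hF₂ _ x)),
    fderiv_fun_mul (hF₁ x) (hG₂ _ x), fderiv_fun_mul (hG₁ x) (hF₂ _ x)]
  simp only [add_apply, smul_apply, smul_eq_mul, conj_trivial]
  ring

theorem hasGradientAt_comp_norm_sq {x : E} (hf : DifferentiableAt ℝ f (‖x‖ ^ 2)) :
    HasGradientAt (fun y : E => f (‖y‖ ^ 2)) ((2 * deriv f (‖x‖ ^ 2)) • x) x := by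
  rw [hasGradientAt_iff_hasFDerivAt]
  refine (hf.hasDerivAt.comp_hasFDerivAt x
    (hasStrictFDerivAt_norm_sq x).hasFDerivAt).congr_fderiv ?_
  ext v
  simp only [smul_apply, coe_innerSL_apply, nsmul_eq_mul, Nat.cast_ofNat, smul_eq_mul, map_smul,
    toDual_apply_apply]
  ring

theorem laplacian_comp_norm_sq (hf : ContDiff ℝ 2 f) (x : E) :
    Δ (fun y : E => f (‖y‖ ^ 2)) x =
      2 * Module.finrank ℝ E * deriv f (‖x‖ ^ 2) + 4 * ‖x‖ ^ 2 * deriv (deriv f) (‖x‖ ^ 2) := by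
  let b := stdOrthonormalBasis ℝ E
  have hf₁ : Differentiable ℝ f := hf.differentiable two_ne_zero
  have hf₂ : Differentiable ℝ (deriv f) :=
    (hf.deriv' (n := 1)).differentiable_one
  have hd (v y : E) : fderiv ℝ (fun y : E => f (‖y‖ ^ 2)) y v =
      2 * (deriv f (‖y‖ ^ 2) * ⟪y, v⟫_ℝ) := by
    rw [(hasGradientAt_comp_norm_sq (hf₁ _)).fderiv_apply, inner_smul_left]
    simp [mul_assoc]
  have hdd (v : E) : fderiv ℝ (fun y => fderiv ℝ (fun y : E => f (‖y‖ ^ 2)) y v) x v =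
      2 * deriv f (‖x‖ ^ 2) * ⟪v, v⟫_ℝ + 4 * deriv (deriv f) (‖x‖ ^ 2) * ⟪x, v⟫_ℝ ^ 2 := by
    have hr := hasGradientAt_comp_norm_sq (hf₂ (‖x‖ ^ 2))
    have hi : DifferentiableAt ℝ (fun y : E => ⟪y, v⟫_ℝ) x :=
      differentiableAt_id.inner ℝ (differentiableAt_const v)
    simp only [hd]
    rw [fderiv_const_mul (hr.differentiableAt.fun_mul hi),
      fderiv_fun_mul hr.differentiableAt hi]
    simp only [smul_add, add_apply, smul_apply, differentiableAt_fun_id, differentiableAt_const,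
      fderiv_inner_apply, fderiv_fun_const, Pi.zero_apply, zero_apply, inner_zero_right,
      fderiv_fun_id, ContinuousLinearMap.id_apply, zero_add, smul_eq_mul, hr.fderiv_apply,
      inner_smul_left, conj_trivial]
    ring
  rw [laplacian_eq_sum_fderiv_fderiv b (hf.fun_comp (contDiff_norm_sq ℝ))]
  simp only [hdd, Finset.sum_add_distrib, ← Finset.mul_sum, b.sum_sq_inner_left]
  simp only [real_inner_self_eq_norm_sq, b.norm_eq_one, one_pow,
    Finset.sum_const, Finset.card_univ, Fintype.card_fin, nsmul_eq_mul, mul_one]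
  ring

omit [FiniteDimensional ℝ E] in
theorem fderiv_bilin_self (x v : E) : fderiv ℝ (fun y => B y y) x v = B x v + B v x := by
  rw [fderiv_clm_apply (by fun_prop) (by fun_prop)]
  simp

theorem laplacian_bilin_self (b : OrthonormalBasis ι ℝ E) (x : E) :
    Δ (fun y => B y y) x = 2 * ∑ i, B (b i) (b i) := by
  rw [laplacian_eq_sum_fderiv_fderiv b (by fun_prop), Finset.mul_sum]
  refine Finset.sum_congr rfl fun i _ => ?_
  simp only [fderiv_bilin_self]
  rw [fderiv_fun_add (by fun_prop) (by fun_prop)]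
  have hflip : fderiv ℝ (fun y => B y (b i)) x = B.flip (b i) := (B.flip (b i)).fderiv
  simp [hflip, two_mul]

end Laplacian

namespace IsPosHomogeneous

section Module

variable {E : Type*} [AddCommGroup E] [Module ℝ E] {k l : ℕ} {g h : E → ℝ}

theorem mul (hg : IsPosHomogeneous k g) (hh : IsPosHomogeneous l h) :
    IsPosHomogeneous (k + l) (fun x => g x * h x) := fun r hr x => by
  simp only [hg r hr, hh r hr, pow_add]
  ring

theorem sum {ι : Type*} {s : Finset ι} {h : ι → E → ℝ} (hh : ∀ i ∈ s, IsPosHomogeneous k (h i)) :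
    IsPosHomogeneous k (fun x => ∑ i ∈ s, h i x) := fun r hr x => by
  simp only [Finset.mul_sum]
  exact Finset.sum_congr rfl fun i hi => hh i hi r hr x

end Module

variable {E : Type*} [NormedAddCommGroup E] [NormedSpace ℝ E] {k : ℕ} {h : E → ℝ}

theorem bilin_self (B : E →L[ℝ] E →L[ℝ] ℝ) : IsPosHomogeneous 2 (fun x => B x x) :=
  fun r _ x => by
    simp only [map_smul, FunLike.coe_smul, Pi.smul_apply, smul_eq_mul]
    ring

theorem fderiv_apply (hh : IsPosHomogeneous (k + 1) h) (v : E) :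
    IsPosHomogeneous k (fun x => fderiv ℝ h x v) := fun r hr x => by
  have hscale : (fun y => h (r • y)) = r ^ (k + 1) • h := funext fun y => hh r hr y
  have hd : r • fderiv ℝ h (r • x) = r ^ (k + 1) • fderiv ℝ h x := by
    rw [← fderiv_comp_smul, hscale, fderiv_const_smul_field, Pi.smul_apply]
  apply mul_left_cancel₀ hr.ne'
  simpa [pow_succ', mul_assoc] using congr($hd v)

theorem fderiv_self (hh : IsPosHomogeneous k h) {x : E} (hx : DifferentiableAt ℝ h x) :
    fderiv ℝ h x x = k * h x := by
  have hpow : HasDerivAt (fun r : ℝ => r ^ k * h x) (k * h x) 1 := by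
    simpa using (hasDerivAt_pow k (1 : ℝ)).mul_const (h x)
  have hcomp : HasDerivAt (fun r : ℝ => h (r • x)) (fderiv ℝ h x x) 1 := by
    have hline : HasDerivAt (fun r : ℝ => r • x) x 1 := by
      simpa using (hasDerivAt_id (1 : ℝ)).smul_const x
    exact HasFDerivAt.comp_hasDerivAt_of_eq 1 hx.hasFDerivAt hline (one_smul ℝ x).symm
  refine hcomp.unique (hpow.congr_of_eventuallyEq ?_)
  filter_upwards [lt_mem_nhds one_pos] with r hr using hh r hr x

theorem inner_left {E : Type*} [NormedAddCommGroup E] [InnerProductSpace ℝ E] (v : E) :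
    IsPosHomogeneous 1 (fun x => inner ℝ x v) := fun r _ x => by
  simp [inner_smul_left]

end IsPosHomogeneous

section Radial

open InnerProductSpace Laplacian

variable {E : Type*} [NormedAddCommGroup E] [InnerProductSpace ℝ E]
  [FiniteDimensional ℝ E] {h : E → ℝ} {f : ℝ → ℝ} {k : ℕ}

theorem IsPosHomogeneous.laplacian (hh : IsPosHomogeneous (k + 2) h) (hC : ContDiff ℝ 2 h) :
    IsPosHomogeneous k (Δ h) := by
  rw [funext (laplacian_eq_sum_fderiv_fderiv (stdOrthonormalBasis ℝ E) hC)]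
  exact .sum fun i _ => (hh.fderiv_apply _).fderiv_apply _

theorem laplacian_comp_norm_sq_mul (hh : IsPosHomogeneous k h) (hC : ContDiff ℝ 2 h)
    (hf : ContDiff ℝ 2 f) (x : E) :
    Δ (fun y => f (‖y‖ ^ 2) * h y) x =
      f (‖x‖ ^ 2) * Δ h x + (2 * (Module.finrank ℝ E + 2 * k) * deriv f (‖x‖ ^ 2)
        + 4 * ‖x‖ ^ 2 * deriv (deriv f) (‖x‖ ^ 2)) * h x := by
  have hdf : DifferentiableAt ℝ f (‖x‖ ^ 2) := hf.differentiable two_ne_zero _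
  have hdh : DifferentiableAt ℝ h x := hC.differentiable two_ne_zero x
  rw [laplacian_mul (hf.fun_comp (contDiff_norm_sq ℝ)) hC, laplacian_comp_norm_sq hf,
    (hasGradientAt_comp_norm_sq hdf).gradient, inner_gradient_right, map_smul,
    hh.fderiv_self hdh]
  simp only [smul_eq_mul, conj_trivial]
  ring

end Radial

section Polar

open Set Metric

theorem integral_volumeIoiPow (n : ℕ) (g : ℝ → ℝ) :
    ∫ r : Ioi (0 : ℝ), g r ∂.volumeIoiPow n = ∫ r in Ioi (0 : ℝ), r ^ n * g r := by
  rw [Measure.volumeIoiPow, integral_withDensity_eq_integral_toReal_smul (by fun_prop) (by simp),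
    ← integral_subtype_comap measurableSet_Ioi fun r : ℝ => r ^ n * g r]
  refine integral_congr_ae (.of_forall fun r => ?_)
  simp [ENNReal.toReal_ofReal (pow_nonneg r.2.out.le n)]

theorem integrable_volumeIoiPow {n : ℕ} {g : ℝ → ℝ} :
    Integrable (fun r : Ioi (0 : ℝ) => g r) (.volumeIoiPow n) ↔
      IntegrableOn (fun r => r ^ n * g r) (Ioi 0) := by
  rw [Measure.volumeIoiPow, integrable_withDensity_iff_integrable_smul' (by fun_prop) (by simp),
    integrableOn_iff_comap_subtypeVal measurableSet_Ioi]
  refine integrable_congr (.of_forall fun r => ?_)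
  simp [ENNReal.toReal_ofReal (pow_nonneg r.2.out.le n)]

variable {E : Type*} [NormedAddCommGroup E] [NormedSpace ℝ E] {k : ℕ} {h : E → ℝ}

theorem IsPosHomogeneous.mul_comp_norm_eq (hh : IsPosHomogeneous k h) (g : ℝ → ℝ)
    (x : ({0}ᶜ : Set E)) :
    h x * g ‖(x : E)‖ = h (homeomorphUnitSphereProd E x).1 *
      ((homeomorphUnitSphereProd E x).2 ^ k * g (homeomorphUnitSphereProd E x).2) := by
  have hx : 0 < ‖(x : E)‖ := norm_pos_iff.2 x.2
  rw [homeomorphUnitSphereProd_apply_fst_coe, homeomorphUnitSphereProd_apply_snd_coe,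
    hh _ (inv_pos.2 hx), inv_pow]
  field_simp

variable [FiniteDimensional ℝ E] [MeasurableSpace E] [BorelSpace E] [Nontrivial E]
  (μ : Measure E) [μ.IsAddHaarMeasure]

theorem IsPosHomogeneous.integral_mul_comp_norm (hh : IsPosHomogeneous k h) (g : ℝ → ℝ) :
    ∫ x, h x * g ‖x‖ ∂μ = (∫ θ, h θ ∂μ.toSphere) *
      ∫ r in Ioi (0 : ℝ), r ^ (Module.finrank ℝ E - 1 + k) * g r := calc
  ∫ x, h x * g ‖x‖ ∂μ
    = ∫ x : ({0}ᶜ : Set E), h x * g ‖(x : E)‖ ∂μ.comap (↑) := by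
      rw [integral_subtype_comap (measurableSet_singleton 0).compl fun x => h x * g ‖x‖,
        restrict_compl_singleton]
  _ = ∫ z : sphere (0 : E) 1 × Ioi (0 : ℝ), h z.1 * (z.2 ^ k * g z.2)
        ∂μ.toSphere.prod (.volumeIoiPow (Module.finrank ℝ E - 1)) := by
      simp only [hh.mul_comp_norm_eq g]
      exact μ.measurePreserving_homeomorphUnitSphereProd.integral_comp
        (Homeomorph.measurableEmbedding _) fun z => h z.1 * (z.2 ^ k * g z.2)
  _ = (∫ θ, h θ ∂μ.toSphere) *
        ∫ r in Ioi (0 : ℝ), r ^ (Module.finrank ℝ E - 1 + k) * g r := by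
      simp only [pow_add, mul_assoc, ← integral_volumeIoiPow]
      exact integral_prod_mul (fun θ : sphere (0 : E) 1 => h θ)
        fun r : Ioi (0 : ℝ) => (r : ℝ) ^ k * g r

theorem IsPosHomogeneous.integrable_mul_comp_norm (hh : IsPosHomogeneous k h) (hc : Continuous h)
    {g : ℝ → ℝ}
    (hg : IntegrableOn (fun r => r ^ (Module.finrank ℝ E - 1 + k) * g r) (Ioi 0)) :
    Integrable (fun x => h x * g ‖x‖) μ := by
  simp only [pow_add, mul_assoc] at hg
  have hsphere : Integrable (fun θ : sphere (0 : E) 1 => h θ) μ.toSphere :=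
    (hc.comp continuous_subtype_val).integrable_of_hasCompactSupport (.of_compactSpace _)
  rw [← restrict_compl_singleton (μ := μ) 0, ← IntegrableOn,
    integrableOn_iff_comap_subtypeVal (measurableSet_singleton 0).compl]
  simp only [Function.comp_def, hh.mul_comp_norm_eq g]
  exact (μ.measurePreserving_homeomorphUnitSphereProd.integrable_comp_emb
    (Homeomorph.measurableEmbedding _)).2 (hsphere.mul_prod (integrable_volumeIoiPow.2 hg))

end Polar

section SphericalGreen

open InnerProductSpace Laplacian Set Metric

theorem integral_pow_mul_exp_neg_sq (m : ℕ) :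
    ∫ r in Ioi (0 : ℝ), r ^ m * Real.exp (-r ^ 2) = 2⁻¹ * Real.Gamma ((m + 1) / 2) := by
  have h := integral_rpow_mul_exp_neg_rpow (p := 2) (q := m) two_pos
    (by linarith [m.cast_nonneg (α := ℝ)])
  simpa [Real.rpow_natCast] using h

theorem integral_pow_mul_exp_neg_sq_pos (m : ℕ) :
    0 < ∫ r in Ioi (0 : ℝ), r ^ m * Real.exp (-r ^ 2) := by
  rw [integral_pow_mul_exp_neg_sq]
  have := Real.Gamma_pos_of_pos (s := (m + 1) / 2) (by positivity)
  positivity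

theorem integral_pow_add_two_mul_exp_neg_sq (m : ℕ) :
    2 * ∫ r in Ioi (0 : ℝ), r ^ (m + 2) * Real.exp (-r ^ 2) =
      (m + 1) * ∫ r in Ioi (0 : ℝ), r ^ m * Real.exp (-r ^ 2) := by
  have hm : ((m : ℝ) + 1) / 2 ≠ 0 := by positivity
  have hshift : ((m + 2 : ℕ) + 1 : ℝ) / 2 = (m + 1) / 2 + 1 := by push_cast; ring
  rw [integral_pow_mul_exp_neg_sq, integral_pow_mul_exp_neg_sq, hshift, Real.Gamma_add_one hm]
  ring

theorem integrableOn_pow_mul_exp_neg_sq (m : ℕ) :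
    IntegrableOn (fun r : ℝ => r ^ m * Real.exp (-r ^ 2)) (Ioi 0) := by
  simpa [Real.rpow_natCast] using integrableOn_rpow_mul_exp_neg_mul_sq one_pos
    (s := m) (by linarith [m.cast_nonneg (α := ℝ)])

variable {E : Type*} [NormedAddCommGroup E] [InnerProductSpace ℝ E] [FiniteDimensional ℝ E]
  {k : ℕ} {h : E → ℝ}

theorem hasGradientAt_exp_neg_norm_sq (x : E) :
    HasGradientAt (fun y : E => Real.exp (-‖y‖ ^ 2)) ((-2 * Real.exp (-‖x‖ ^ 2)) • x) x := by
  have hexp : HasDerivAt (fun t => Real.exp (-t)) (-Real.exp (-‖x‖ ^ 2)) (‖x‖ ^ 2) := by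
    simpa using (hasDerivAt_neg (‖x‖ ^ 2)).exp
  simpa [hexp.deriv] using hasGradientAt_comp_norm_sq hexp.differentiableAt

variable [MeasurableSpace E] [BorelSpace E] [Nontrivial E] (μ : Measure E)
  [μ.IsAddHaarMeasure]

theorem IsPosHomogeneous.integrable_mul_exp_neg_norm_sq
    (hh : IsPosHomogeneous k h) (hc : Continuous h) :
    Integrable (fun x => h x * Real.exp (-‖x‖ ^ 2)) μ :=
  hh.integrable_mul_comp_norm μ hc (integrableOn_pow_mul_exp_neg_sq _)

theorem IsPosHomogeneous.integral_fderiv_mul_exp_neg_norm_sq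
    (hh : IsPosHomogeneous (k + 1) h) (hC : ContDiff ℝ 1 h) (v : E) :
    ∫ x, fderiv ℝ h x v * Real.exp (-‖x‖ ^ 2) ∂μ =
      2 * ∫ x, h x * ⟪x, v⟫_ℝ * Real.exp (-‖x‖ ^ 2) ∂μ := by
  have hgauss (x : E) : h x * fderiv ℝ (fun y : E => Real.exp (-‖y‖ ^ 2)) x v =
      -2 * (h x * ⟪x, v⟫_ℝ * Real.exp (-‖x‖ ^ 2)) := by
    rw [(hasGradientAt_exp_neg_norm_sq x).fderiv_apply, inner_smul_left]
    simp only [conj_trivial]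
    ring
  have hint : Integrable (fun x => h x * ⟪x, v⟫_ℝ * Real.exp (-‖x‖ ^ 2)) μ :=
    (hh.mul (.inner_left v)).integrable_mul_exp_neg_norm_sq μ
      (hC.continuous.mul (continuous_id.inner continuous_const))
  have hparts := integral_mul_fderiv_eq_neg_fderiv_mul_of_integrable (v := v)
    ((hh.fderiv_apply v).integrable_mul_exp_neg_norm_sq μ (by fun_prop))
    (by simpa only [hgauss] using hint.const_mul (-2))
    (hh.integrable_mul_exp_neg_norm_sq μ hC.continuous)
    (fun x _ => hC.differentiable_one x)
    (fun x _ => (hasGradientAt_exp_neg_norm_sq x).differentiableAt)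
  simp only [hgauss, integral_const_mul] at hparts
  linarith

theorem IsPosHomogeneous.integral_laplacian_mul_exp_neg_norm_sq
    (hh : IsPosHomogeneous (k + 2) h) (hC : ContDiff ℝ 2 h) :
    ∫ x, Δ h x * Real.exp (-‖x‖ ^ 2) ∂μ =
      2 * (k + 2) * ∫ x, h x * Real.exp (-‖x‖ ^ 2) ∂μ := by
  let b := stdOrthonormalBasis ℝ E
  have hC' (v : E) : ContDiff ℝ 1 fun x => fderiv ℝ h x v := by fun_prop
  have heuler (x : E) : ∑ i, fderiv ℝ h x (b i) * ⟪x, b i⟫_ℝ = (k + 2 : ℕ) * h x := by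
    rw [← hh.fderiv_self (hC.differentiable two_ne_zero x), ← inner_gradient_left,
      ← b.sum_inner_mul_inner]
    simp only [inner_gradient_left, real_inner_comm]
  calc
    ∫ x, Δ h x * Real.exp (-‖x‖ ^ 2) ∂μ
      = ∑ i, ∫ x, fderiv ℝ (fun y => fderiv ℝ h y (b i)) x (b i) * Real.exp (-‖x‖ ^ 2) ∂μ := by
        simp only [laplacian_eq_sum_fderiv_fderiv b hC, Finset.sum_mul]
        exact integral_finsetSum _ fun i _ =>
          ((hh.fderiv_apply _).fderiv_apply _).integrable_mul_exp_neg_norm_sq μ (by fun_prop)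
    _ = 2 * ∑ i, ∫ x, fderiv ℝ h x (b i) * ⟪x, b i⟫_ℝ * Real.exp (-‖x‖ ^ 2) ∂μ := by
        simp only [(hh.fderiv_apply _).integral_fderiv_mul_exp_neg_norm_sq μ (hC' _),
          Finset.mul_sum]
    _ = 2 * (k + 2) * ∫ x, h x * Real.exp (-‖x‖ ^ 2) ∂μ := by
        rw [← integral_finsetSum _ fun i _ =>
          ((hh.fderiv_apply _).mul (.inner_left (b i))).integrable_mul_exp_neg_norm_sq μ
            ((hC' _).continuous.mul (continuous_id.inner continuous_const))]
        simp only [← Finset.sum_mul, heuler]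
        simp only [mul_assoc, integral_const_mul]
        push_cast
        ring

theorem IsPosHomogeneous.integral_sphere_laplacian
    (hh : IsPosHomogeneous (k + 2) h) (hC : ContDiff ℝ 2 h) :
    ∫ θ : sphere (0 : E) 1, Δ h θ ∂μ.toSphere =
      (k + 2) * (k + Module.finrank ℝ E) * ∫ θ : sphere (0 : E) 1, h θ ∂μ.toSphere := by
  have hgauss := hh.integral_laplacian_mul_exp_neg_norm_sq μ hC
  rw [(hh.laplacian hC).integral_mul_comp_norm μ fun r => Real.exp (-r ^ 2),
    hh.integral_mul_comp_norm μ fun r => Real.exp (-r ^ 2)] at hgauss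
  have hrec := integral_pow_add_two_mul_exp_neg_sq (Module.finrank ℝ E - 1 + k)
  have hdim : ((Module.finrank ℝ E - 1 + k : ℕ) : ℝ) + 1 = k + Module.finrank ℝ E := by
    have := Module.finrank_pos (R := ℝ) (M := E)
    norm_cast
    lia
  rw [hdim] at hrec
  apply mul_right_cancel₀ (integral_pow_mul_exp_neg_sq_pos (Module.finrank ℝ E - 1 + k)).ne'
  rw [hgauss, ← add_assoc]
  linear_combination (k + 2) * (∫ θ : sphere (0 : E) 1, h θ ∂μ.toSphere) * hrec

end SphericalGreen

section SphereBilin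

open InnerProductSpace Laplacian Set Metric

variable {ι E : Type*} [Fintype ι] [NormedAddCommGroup E] [InnerProductSpace ℝ E]
  [FiniteDimensional ℝ E] {B : E →L[ℝ] E →L[ℝ] ℝ}

theorem laplacian_bilin_self_sq (b : OrthonormalBasis ι ℝ E) (hB : ∑ i, B (b i) (b i) = 0) (x : E) :
    Δ (fun y => B y y * B y y) x = 2 * ∑ i, (B x (b i) + B (b i) x) ^ 2 := by
  have hC : ContDiff ℝ 2 fun y => B y y := by fun_prop
  rw [laplacian_mul hC hC, laplacian_bilin_self b, hB, ← b.sum_inner_mul_inner]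
  simp [inner_gradient_left, inner_gradient_right, fderiv_bilin_self, sq]

variable [MeasurableSpace E] [BorelSpace E] [Nontrivial E] (μ : Measure E) [μ.IsAddHaarMeasure]
  (b : OrthonormalBasis ι ℝ E)

theorem integral_sphere_bilin_self (B : E →L[ℝ] E →L[ℝ] ℝ) :
    ∫ θ : sphere (0 : E) 1, B θ θ ∂μ.toSphere =
      μ.toSphere.real univ / Module.finrank ℝ E * ∑ i, B (b i) (b i) := by
  have hn : (Module.finrank ℝ E : ℝ) ≠ 0 := by exact_mod_cast Module.finrank_pos.ne'
  have hgreen := (IsPosHomogeneous.bilin_self B).integral_sphere_laplacian μ (by fun_prop)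
  simp only [laplacian_bilin_self b, integral_const, smul_eq_mul] at hgreen
  field_simp
  push_cast at hgreen
  linarith

theorem integral_sphere_linear_sq (φ : E →L[ℝ] ℝ) :
    ∫ θ : sphere (0 : E) 1, φ θ ^ 2 ∂μ.toSphere =
      μ.toSphere.real univ / Module.finrank ℝ E * ∑ i, φ (b i) ^ 2 := by
  simpa only [ContinuousLinearMap.smulRight_apply, FunLike.coe_smul, Pi.smul_apply, smul_eq_mul,
    ← sq] using integral_sphere_bilin_self μ b (φ.smulRight φ)

theorem integral_sphere_bilin_self_sq (hB : ∑ i, B (b i) (b i) = 0) :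
    ∫ θ : sphere (0 : E) 1, B θ θ * B θ θ ∂μ.toSphere =
      μ.toSphere.real univ / (2 * Module.finrank ℝ E * (Module.finrank ℝ E + 2)) *
        ∑ i, ∑ j, (B (b i) (b j) + B (b j) (b i)) ^ 2 := by
  have hn : (Module.finrank ℝ E : ℝ) ≠ 0 := by exact_mod_cast Module.finrank_pos.ne'
  have hlin (i : ι) : ∫ θ : sphere (0 : E) 1, (B θ (b i) + B (b i) θ) ^ 2 ∂μ.toSphere =
      μ.toSphere.real univ / Module.finrank ℝ E * ∑ j, (B (b i) (b j) + B (b j) (b i)) ^ 2 := by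
    simpa only [FunLike.coe_add, Pi.add_apply, ContinuousLinearMap.flip_apply, add_comm]
      using integral_sphere_linear_sq μ b (B.flip (b i) + B (b i))
  have hgreen := ((IsPosHomogeneous.bilin_self B).mul (.bilin_self B)).integral_sphere_laplacian μ
    (by fun_prop)
  simp only [laplacian_bilin_self_sq b hB, integral_const_mul] at hgreen
  rw [integral_finsetSum _ fun i _ => (Continuous.integrable_of_hasCompactSupport (by fun_prop)
    (.of_compactSpace _))] at hgreen
  simp only [hlin, ← Finset.mul_sum] at hgreen
  field_simp at hgreen ⊢
  push_cast at hgreen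
  linarith

end SphereBilin

section RadialSphereBilin

open InnerProductSpace Laplacian Set Metric

/-- In dimension `n`, the Laplacian of `f(|y|²) B(y, y)` for a trace-free bilinear form `B` is
`B(y, y)` times this factor, evaluated at `r = |y|`. -/
def radialFactor (n : ℕ) (f : ℝ → ℝ) (r : ℝ) : ℝ :=
  2 * ((n : ℝ) + 4) * deriv f (r ^ 2) + 4 * r ^ 2 * deriv (deriv f) (r ^ 2)

variable {ι E : Type*} [Fintype ι] [NormedAddCommGroup E] [InnerProductSpace ℝ E]
  [FiniteDimensional ℝ E] {f : ℝ → ℝ} {B : E →L[ℝ] E →L[ℝ] ℝ} (b : OrthonormalBasis ι ℝ E)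

theorem laplacian_comp_norm_sq_mul_bilin_self (hf : ContDiff ℝ 2 f) (hB : ∑ i, B (b i) (b i) = 0)
    (x : E) :
    Δ (fun y => f (‖y‖ ^ 2) * B y y) x = radialFactor (Module.finrank ℝ E) f ‖x‖ * B x x := by
  rw [laplacian_comp_norm_sq_mul (.bilin_self B) (by fun_prop) hf, laplacian_bilin_self b, hB,
    radialFactor]
  push_cast
  ring

variable [MeasurableSpace E] [BorelSpace E] [Nontrivial E] (μ : Measure E) [μ.IsAddHaarMeasure]

theorem integral_laplacian_comp_norm_sq_mul_bilin_self_sq (hf : ContDiff ℝ 2 f)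
    (hB : ∑ i, B (b i) (b i) = 0) (w : ℝ → ℝ) :
    ∫ x, Δ (fun y => f (‖y‖ ^ 2) * B y y) x ^ 2 * w ‖x‖ ∂μ =
      μ.toSphere.real univ / (2 * Module.finrank ℝ E * (Module.finrank ℝ E + 2)) *
        (∑ i, ∑ j, (B (b i) (b j) + B (b j) (b i)) ^ 2) *
        ∫ r in Ioi (0 : ℝ), radialFactor (Module.finrank ℝ E) f r ^ 2 *
          r ^ (Module.finrank ℝ E + 3) * w r := by
  have hpolar := ((IsPosHomogeneous.bilin_self B).mul (.bilin_self B)).integral_mul_comp_norm μ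
    fun r => radialFactor (Module.finrank ℝ E) f r ^ 2 * w r
  have hdim : Module.finrank ℝ E - 1 + (2 + 2) = Module.finrank ℝ E + 3 := by
    grind [Module.finrank_pos (R := ℝ) (M := E)]
  rw [integral_sphere_bilin_self_sq μ b hB, hdim] at hpolar
  convert hpolar using 3 with x
  · rw [laplacian_comp_norm_sq_mul_bilin_self b hf hB]
    ring
  · exact funext fun r => by ring

theorem integrable_laplacian_comp_norm_sq_mul_bilin_self_sq (hf : ContDiff ℝ 2 f)
    (hB : ∑ i, B (b i) (b i) = 0) {w : ℝ → ℝ}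
    (hw : IntegrableOn (fun r => radialFactor (Module.finrank ℝ E) f r ^ 2 *
      r ^ (Module.finrank ℝ E + 3) * w r) (Ioi 0)) :
    Integrable (fun x => Δ (fun y => f (‖y‖ ^ 2) * B y y) x ^ 2 * w ‖x‖) μ := by
  have hdim : Module.finrank ℝ E - 1 + (2 + 2) = Module.finrank ℝ E + 3 := by
    grind [Module.finrank_pos (R := ℝ) (M := E)]
  have hw' : IntegrableOn (fun r => r ^ (Module.finrank ℝ E - 1 + (2 + 2)) *
      (radialFactor (Module.finrank ℝ E) f r ^ 2 * w r)) (Ioi 0) := by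
    rw [hdim]
    exact hw.congr_fun (fun r _ => by ring) measurableSet_Ioi
  convert ((IsPosHomogeneous.bilin_self B).mul (.bilin_self B)).integrable_mul_comp_norm μ
    (by fun_prop) hw' using 2 with x
  rw [laplacian_comp_norm_sq_mul_bilin_self b hf hB]
  ring

end RadialSphereBilin

section RadialDecay

open Polynomial Set Filter Asymptotics

theorem integrableOn_eval_div_eval {P Q : ℝ[X]} (hdeg : P.natDegree + 2 ≤ Q.natDegree)
    (hQ : ∀ r ∈ Ici (0 : ℝ), Q.eval r ≠ 0) :
    IntegrableOn (fun r => P.eval r / Q.eval r) (Ioi 0) := by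
  have hQ₀ : Q ≠ 0 := fun h => hQ 0 self_mem_Ici (by rw [h, eval_zero])
  have hPX : (P * (1 + X ^ 2)).degree ≤ Q.degree := by
    refine natDegree_le_iff_degree_le.1 ?_ |>.trans (degree_eq_natDegree hQ₀).ge
    have : natDegree (1 + X ^ 2 : ℝ[X]) ≤ 2 := by compute_degree
    exact natDegree_mul_le.trans (by lia)
  have hO : (fun r => P.eval r / Q.eval r) =O[atTop] fun r => (1 + r ^ 2)⁻¹ := by
    refine ((isBigO_atTop_of_degree_le _ _ hPX).mul
      (isBigO_refl (fun r => (Q.eval r)⁻¹ * (1 + r ^ 2)⁻¹) atTop)).congr' ?_ ?_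
    · refine .of_forall fun r => ?_
      simp only [eval_mul, eval_add, eval_one, eval_pow, eval_X]
      field_simp
    · filter_upwards [eventually_ge_atTop 0] with r hr
      rw [mul_inv_cancel_left₀ (hQ r hr)]
  have hcont : ContinuousOn (fun r => P.eval r / Q.eval r) (Ici 0) :=
    P.continuous.continuousOn.div Q.continuous.continuousOn hQ
  exact ((hcont.locallyIntegrableOn measurableSet_Ici).integrableOn_of_isBigO_atTop hO
    (integrable_inv_one_add_sq.integrableAtFilter _)).mono_set Ioi_subset_Ici_self

theorem natDegree_X_mul_derivative_le (P : ℝ[X]) : (X * derivative P).natDegree ≤ P.natDegree := by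
  obtain hP | hP := eq_or_ne P.natDegree 0
  · rw [derivative_of_natDegree_zero hP, mul_zero, natDegree_zero]
    exact Nat.zero_le _
  · have hmul : (X * derivative P).natDegree ≤ 1 + (derivative P).natDegree :=
      natDegree_mul_le_of_le natDegree_X_le le_rfl
    have hlt := natDegree_derivative_lt hP
    lia

theorem integrableOn_radialFactor_eval_sq_mul_pow_div {N : ℕ} {P : ℝ[X]}
    (hP : 4 * (P.natDegree - 1) + 13 ≤ N) {c : ℝ} (hc : 0 < c) :
    IntegrableOn (fun r => radialFactor N P.eval r ^ 2 * r ^ (N + 3) / (c + r ^ 2) ^ (N - 4))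
      (Ioi 0) := by
  let S : ℝ[X] := C (2 * ((N : ℝ) + 4)) * derivative P + C 4 * (X * derivative (derivative P))
  let R : ℝ[X] := S.comp (X ^ 2) ^ 2 * X ^ (N + 3)
  let Q : ℝ[X] := (X ^ 2 + C c) ^ (N - 4)
  have hS : S.natDegree ≤ P.natDegree - 1 := by
    have hP' := natDegree_derivative_le P
    refine natDegree_add_le_of_degree_le ((natDegree_C_mul_le _ _).trans hP') ?_
    exact (natDegree_C_mul_le _ _).trans ((natDegree_X_mul_derivative_le _).trans hP')
  have hR : R.natDegree ≤ 4 * (P.natDegree - 1) + (N + 3) := by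
    refine natDegree_mul_le.trans (Nat.add_le_add ?_ (natDegree_X_pow_le _))
    rw [natDegree_pow, natDegree_comp, natDegree_X_pow]
    lia
  have hQ : Q.natDegree = 2 * (N - 4) := by
    rw [natDegree_pow, natDegree_X_pow_add_C, mul_comm]
  have hderiv (p : ℝ[X]) : deriv p.eval = (derivative p).eval := funext fun _ => p.deriv
  have heval (r : ℝ) : radialFactor N P.eval r ^ 2 * r ^ (N + 3) / (c + r ^ 2) ^ (N - 4) =
      R.eval r / Q.eval r := by
    simp only [R, S, Q, radialFactor, hderiv, eval_mul, eval_pow, eval_comp, eval_add, eval_C,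
      eval_X]
    ring
  simp only [heval]
  refine integrableOn_eval_div_eval (by lia) fun r _ => ?_
  simp only [Q, eval_pow, eval_add, eval_X, eval_C]
  positivity

end RadialDecay

section Euclidean

open InnerProductSpace Laplacian Set

variable {N : ℕ}

theorem sum_pd_pd {F : EuclideanSpace ℝ (Fin N) → ℝ} (hF : ContDiff ℝ 2 F)
    (y : EuclideanSpace ℝ (Fin N)) : ∑ m, pd N m (pd N m F) y = Δ F y := by
  simp only [laplacian_eq_sum_fderiv_fderiv (EuclideanSpace.basisFun (Fin N) ℝ) hF,
    EuclideanSpace.basisFun_apply]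
  rfl

/-- The bilinear form with matrix `(W i p j q)` in the indices `p`, `q`; its quadratic form is
`Hmat N W i j`. -/
def curvatureForm (W : Fin N → Fin N → Fin N → Fin N → ℝ) (i j : Fin N) :
    EuclideanSpace ℝ (Fin N) →L[ℝ] EuclideanSpace ℝ (Fin N) →L[ℝ] ℝ :=
  (Matrix.toBilin (EuclideanSpace.basisFun (Fin N) ℝ).toBasis
    (.of fun p q => W i p j q)).toContinuousBilinearMap

variable (W : Fin N → Fin N → Fin N → Fin N → ℝ) (i j : Fin N)

theorem curvatureForm_basisFun (p q : Fin N) :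
    curvatureForm W i j (EuclideanSpace.basisFun (Fin N) ℝ p)
      (EuclideanSpace.basisFun (Fin N) ℝ q) = W i p j q := by
  simp [curvatureForm, Matrix.toBilin_apply]

theorem curvatureForm_self (y : EuclideanSpace ℝ (Fin N)) :
    curvatureForm W i j y y = Hmat N W i j y := by
  simp [curvatureForm, Hmat, Matrix.toBilin_apply, mul_comm]

variable {W i j} {f : ℝ → ℝ}

theorem sum_curvatureForm_basisFun_self (hW : ∑ p, W i p j p = 0) :
    ∑ p, curvatureForm W i j (EuclideanSpace.basisFun (Fin N) ℝ p)
      (EuclideanSpace.basisFun (Fin N) ℝ p) = 0 := by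
  simpa only [curvatureForm_basisFun] using hW

theorem Hbar_eq_comp_norm_sq_mul_curvatureForm :
    Hbar N W f i j = fun y => f (‖y‖ ^ 2) * curvatureForm W i j y y :=
  funext fun y => by rw [Hbar, curvatureForm_self]

theorem sum_pd_pd_Hbar_mul_pd_pd_Hbar (hf : ContDiff ℝ 2 f) (y : EuclideanSpace ℝ (Fin N))
    (c : ℝ) :
    ∑ m, ∑ s, pd N m (pd N m (Hbar N W f i j)) y * pd N s (pd N s (Hbar N W f i j)) y * c =
      Δ (Hbar N W f i j) y ^ 2 * c := by
  have hC : ContDiff ℝ 2 (Hbar N W f i j) := by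
    rw [Hbar_eq_comp_norm_sq_mul_curvatureForm]
    exact (hf.fun_comp (contDiff_norm_sq ℝ)).mul (by fun_prop)
  rw [← sum_pd_pd hC, sq, Finset.sum_mul_sum]
  simp only [Finset.sum_mul]

theorem integral_laplacian_Hbar_sq_mul_comp_norm [NeZero N] (hf : ContDiff ℝ 2 f)
    (hW : ∑ p, W i p j p = 0) (w : ℝ → ℝ) :
    ∫ y, Δ (Hbar N W f i j) y ^ 2 * w ‖y‖ =
      sphereArea N / (2 * N * (N + 2)) * (∑ k, ∑ l, (W i k j l + W i l j k) ^ 2) *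
        ∫ r in Ioi (0 : ℝ), radialFactor N f r ^ 2 * r ^ (N + 3) * w r := by
  have h := integral_laplacian_comp_norm_sq_mul_bilin_self_sq
    (EuclideanSpace.basisFun (Fin N) ℝ) volume hf (sum_curvatureForm_basisFun_self hW) w
  simp only [finrank_euclideanSpace_fin, curvatureForm_basisFun] at h
  rw [Hbar_eq_comp_norm_sq_mul_curvatureForm]
  exact h

theorem integrable_laplacian_Hbar_sq_mul_comp_norm [NeZero N] (hf : ContDiff ℝ 2 f)
    (hW : ∑ p, W i p j p = 0) {w : ℝ → ℝ}
    (hw : IntegrableOn (fun r => radialFactor N f r ^ 2 * r ^ (N + 3) * w r) (Ioi 0)) :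
    Integrable fun y => Δ (Hbar N W f i j) y ^ 2 * w ‖y‖ := by
  rw [Hbar_eq_comp_norm_sq_mul_curvatureForm]
  exact integrable_laplacian_comp_norm_sq_mul_bilin_self_sq (EuclideanSpace.basisFun (Fin N) ℝ)
    volume hf (sum_curvatureForm_basisFun_self hW) (by simpa using hw)

end Euclidean

section Bubble

open InnerProductSpace Laplacian

theorem bubble_profile_sq {N : ℕ} (hN : 4 ≤ N) {lam : ℝ} (hlam : 0 < lam) (r : ℝ) :
    ((lam / (lam ^ 2 + r ^ 2)) ^ (((N : ℝ) - 4) / 2)) ^ 2 =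
      lam ^ (N - 4) / (lam ^ 2 + r ^ 2) ^ (N - 4) := by
  have hexp : ((N : ℝ) - 4) / 2 * (2 : ℕ) = (N - 4 : ℕ) := by
    rw [Nat.cast_sub hN]
    push_cast
    ring
  rw [← Real.rpow_mul_natCast (by positivity), hexp, Real.rpow_natCast, div_pow]

theorem stmt_19_general (N : ℕ) (hN : 4 ≤ N)
    (W : Fin N → Fin N → Fin N → Fin N → ℝ)
    (hTrace : ∀ i j, ∑ p : Fin N, W i p j p = 0)
    (f : ℝ → ℝ) (hf : ContDiff ℝ 2 f)
    (lam' : ℝ) (hlam' : 0 < lam')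
    (u : EuclideanSpace ℝ (Fin N) → ℝ)
    (hu : ∀ y, u y = (lam' / (lam' ^ 2 + ‖y‖ ^ 2)) ^ (((N : ℝ) - 4) / 2))
    (hint : IntegrableOn (fun r : ℝ =>
      (2 * ((N : ℝ) + 4) * deriv f (r ^ 2) + 4 * r ^ 2 * deriv (deriv f) (r ^ 2)) ^ 2
        * r ^ (N + 3) / (lam' ^ 2 + r ^ 2) ^ (N - 4)) (Set.Ioi 0)) :
    Integrable (fun y : EuclideanSpace ℝ (Fin N) =>
        ∑ i : Fin N, ∑ j : Fin N, ∑ m : Fin N, ∑ s : Fin N,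
          pd N m (pd N m (Hbar N W f i j)) y * pd N s (pd N s (Hbar N W f i j)) y
            * u y ^ 2) ∧
    (∫ y : EuclideanSpace ℝ (Fin N),
        ∑ i : Fin N, ∑ j : Fin N, ∑ m : Fin N, ∑ s : Fin N,
          pd N m (pd N m (Hbar N W f i j)) y * pd N s (pd N s (Hbar N W f i j)) y
            * u y ^ 2)
      = sphereArea N
          * (∑ i : Fin N, ∑ j : Fin N, ∑ k : Fin N, ∑ l : Fin N,
              (W i k j l + W i l j k) ^ 2)
          * lam' ^ (N - 4)
          * (1 / (2 * N * ((N : ℝ) + 2)))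
          * ∫ r in Set.Ioi (0 : ℝ),
              (2 * ((N : ℝ) + 4) * deriv f (r ^ 2)
                  + 4 * r ^ 2 * deriv (deriv f) (r ^ 2)) ^ 2
                * r ^ (N + 3) / (lam' ^ 2 + r ^ 2) ^ (N - 4) := by
  have : NeZero N := ⟨by lia⟩
  let w (r : ℝ) : ℝ := lam' ^ (N - 4) / (lam' ^ 2 + r ^ 2) ^ (N - 4)
  have hLHS (y : EuclideanSpace ℝ (Fin N)) : ∑ i : Fin N, ∑ j : Fin N, ∑ m : Fin N, ∑ s : Fin N,
      pd N m (pd N m (Hbar N W f i j)) y * pd N s (pd N s (Hbar N W f i j)) y * u y ^ 2 =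
      ∑ i, ∑ j, Δ (Hbar N W f i j) y ^ 2 * w ‖y‖ := by
    simp only [sum_pd_pd_Hbar_mul_pd_pd_Hbar hf, hu, bubble_profile_sq hN hlam', w]
  have hradial (r : ℝ) : radialFactor N f r ^ 2 * r ^ (N + 3) * w r = lam' ^ (N - 4) *
      (radialFactor N f r ^ 2 * r ^ (N + 3) / (lam' ^ 2 + r ^ 2) ^ (N - 4)) := by
    simp only [w]
    ring
  have hterm (i j : Fin N) : Integrable fun y => Δ (Hbar N W f i j) y ^ 2 * w ‖y‖ :=
    integrable_laplacian_Hbar_sq_mul_comp_norm hf (hTrace i j)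
      (by simp only [hradial]; exact hint.const_mul _)
  simp only [hLHS]
  refine ⟨integrable_finsetSum _ fun i _ => integrable_finsetSum _ fun j _ => hterm i j, ?_⟩
  rw [integral_finsetSum _ fun i _ => integrable_finsetSum _ fun j _ => hterm i j,
    Finset.sum_congr rfl fun i _ => integral_finsetSum _ fun j _ => hterm i j]
  simp only [integral_laplacian_Hbar_sq_mul_comp_norm hf (hTrace _ _), hradial,
    integral_const_mul, ← Finset.mul_sum, ← Finset.sum_mul]
  simp only [radialFactor]
  ring

end Bubble

theorem stmt_19 (N : ℕ) (hN : 25 ≤ N)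
    (W : Fin N → Fin N → Fin N → Fin N → ℝ)
    (hW1 : ∀ i p j q, W i p j q = - W p i j q)
    (hW2 : ∀ i p j q, W i p j q = - W i p q j)
    (hW3 : ∀ i p j q, W i p j q = W j q i p)
    (hBianchi : ∀ i p j q, W i p j q + W i j q p + W i q p j = 0)
    (hTrace : ∀ p q, ∑ i : Fin N, W i p i q = 0)
    (f : ℝ → ℝ)
    (hf : ∃ P : Polynomial ℝ, P.degree ≤ 4 ∧ ∀ x, f x = P.eval x)
    (lam' : ℝ) (hlam' : 0 < lam')
    (u : EuclideanSpace ℝ (Fin N) → ℝ)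
    (hu : ∀ y, u y = (lam' / (lam' ^ 2 + ‖y‖ ^ 2)) ^ (((N : ℝ) - 4) / 2)) :
    (∫ y : EuclideanSpace ℝ (Fin N),
        ∑ i : Fin N, ∑ j : Fin N, ∑ m : Fin N, ∑ s : Fin N,
          pd N m (pd N m (Hbar N W f i j)) y * pd N s (pd N s (Hbar N W f i j)) y
            * u y ^ 2)
      = sphereArea N
          * (∑ i : Fin N, ∑ j : Fin N, ∑ k : Fin N, ∑ l : Fin N,
              (W i k j l + W i l j k) ^ 2)
          * lam' ^ (N - 4)
          * (1 / (2 * N * ((N : ℝ) + 2)))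
          * ∫ r in Set.Ioi (0 : ℝ),
              (2 * ((N : ℝ) + 4) * deriv f (r ^ 2)
                  + 4 * r ^ 2 * deriv (deriv f) (r ^ 2)) ^ 2
                * r ^ (N + 3) / (lam' ^ 2 + r ^ 2) ^ (N - 4) := by
  obtain ⟨P, hdeg, hP⟩ := hf
  obtain rfl : f = P.eval := funext hP
  have hdeg' : P.natDegree ≤ 4 := Polynomial.natDegree_le_iff_degree_le.2 hdeg
  have hTrace' (i j : Fin N) : ∑ p, W i p j p = 0 := by
    rw [← hTrace i j]
    exact Finset.sum_congr rfl fun p _ => by rw [hW1, hW2, neg_neg]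
  have hint := integrableOn_radialFactor_eval_sq_mul_pow_div (N := N) (P := P) (by lia)
    (pow_pos hlam' 2)
  exact (stmt_19_general N (by lia) W hTrace' P.eval (P.contDiff_aeval 2) lam' hlam' u hu hint).2
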